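/- arXiv:1812.03345 — 2 statements merged into one kernel-verified Lean document; each statement's English description precedes it below -/
import Mathlib

section
/- Let n ≥ 1 and let λ = (λ_1 ≥ … ≥ λ_n ≥ 0) be a partition with integer parts. Then for every integer k ≥ 0, the number of integer lattice points in the dilate k·GT(λ) equals the product over all pairs 1 ≤ i < j ≤ n of (k(λ_i − λ_j) + j − i)/(j − i). In particular, the Ehrhart counting function of GT(λ) is a polynomial in k with non-negative coefficients. -/
/-- The Gelfand–Tsetlin polytope `GT(lam)` realized as a set of functions
`x : ℕ → ℕ → ℝ`: the meaningful coordinates are `x i j` for `1 ≤ j ≤ i ≤ n`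
(row `i` has entries `x i 1, …, x i i`), all other values vanish, the interlacing
inequalities `x (i+1) j ≥ x i j` and `x i j ≥ x (i+1) (j+1)` hold, and the top row
is `x n j = lam j`. -/
def GTSet (n : ℕ) (lam : Fin n → ℝ) : Set (ℕ → ℕ → ℝ) :=
  {x | (∀ i j, x i j ≠ 0 → 1 ≤ j ∧ j ≤ i ∧ i ≤ n) ∧
    (∀ i j, 1 ≤ j → j ≤ i → i + 1 ≤ n → x i j ≤ x (i + 1) j ∧ x (i + 1) (j + 1) ≤ x i j) ∧
    (∀ j : Fin n, x n (j.1 + 1) = lam j)}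

/-- The set of integer lattice points of the `k`-th dilate `k · GT(lam)`. -/
def gtLatticePoints (n : ℕ) (lam : Fin n → ℕ) (k : ℕ) : Set (ℕ → ℕ → ℝ) :=
  {x ∈ (fun y : ℕ → ℕ → ℝ => (k : ℝ) • y) '' GTSet n (fun j => (lam j : ℝ)) |
    ∀ i j : ℕ, ∃ m : ℤ, x i j = (m : ℝ)}

/-!
Deleting the top row of an integral pattern with top row `μ` leaves an integral pattern whose top
row `ν` interlaces with `μ`, so the numbers of patterns satisfy a recursion over the box of all such
`ν`. In the strictly increasing coordinates `j - μ_j`, the determinant with entries `C(j - μ_j, c)`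
satisfies the same recursion: it is linear in each row, and summing the entries `C(j - ν_j, c)` over
`μ_{j+1} ≤ ν_j ≤ μ_j` telescopes to a difference of consecutive rows of the next larger determinant.
Binomial coefficients are, up to the factors `c!`, monic polynomials, so this determinant is the
Vandermonde determinant divided by `∏ c!`, which is the product formula. Since dilating `GT(λ)` by
`k` gives `GT(kλ)`, the formula for `μ = kλ` counts the lattice points of the dilate, and each
factor is `1 + k (λ_i - λ_j) / (j - i)` with non-negative slope.
-/

open Finset Function
open scoped Pointwise

section BinomialDeterminant

variable {R : Type*} [CommRing R] [BinomialRing R]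

/-- The matrix with rows `(1, x, x(x-1)/2, …)` as `x` runs over the entries of `v`: a Vandermonde
matrix in the basis of binomial coefficients. -/
def binomialVandermonde {n : ℕ} (v : Fin n → R) : Matrix (Fin n) (Fin n) R :=
  Matrix.of fun i c => Ring.choose (v i) (c : ℕ)

lemma det_vandermonde_eq_prod_factorial_mul {n : ℕ} (v : Fin n → R) :
    (Matrix.vandermonde v).det =
      (∏ c : Fin n, ((c : ℕ).factorial : R)) * (binomialVandermonde v).det := by
  nontriviality R
  have monic (c : ℕ) := monic_descPochhammer ℤ c
  have natDegree_map (c : ℕ) : ((descPochhammer ℤ c).map (algebraMap ℤ R)).natDegree = c :=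
    ((monic c).natDegree_map _).trans (descPochhammer_natDegree ℤ c)
  rw [Matrix.det_eval_matrixOfPolynomials_eq_det_vandermonde v
      (fun c => (descPochhammer ℤ c).map (algebraMap ℤ R)) (fun c => natDegree_map c)
      (fun c => (monic c).map _), ← Matrix.det_mul_row]
  congr 1
  ext i c
  simp only [binomialVandermonde, Matrix.of_apply]
  rw [Polynomial.eval_map_algebraMap, Polynomial.aeval_eq_smeval,
    Ring.descPochhammer_eq_factorial_smul_choose, nsmul_eq_mul]

lemma det_binomialVandermonde_natCast (n : ℕ) :
    (binomialVandermonde fun i : Fin n => ((i : ℕ) : R)).det = 1 := by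
  rw [Matrix.det_of_isLowerTriangular]
  · simp [binomialVandermonde, Ring.choose_natCast]
  · intro i c (hic : i < c)
    simp [binomialVandermonde, Ring.choose_natCast, Nat.choose_eq_zero_of_lt hic]

lemma det_vandermonde_eq_prod_pairs {S : Type*} [CommRing S] {n : ℕ} (v : Fin n → S) :
    (Matrix.vandermonde v).det =
      ∏ p ∈ univ.filter (fun p : Fin n × Fin n => p.1 < p.2), (v p.2 - v p.1) := by
  rw [Matrix.det_vandermonde, prod_finset_product]
  simp

lemma det_binomialVandermonde_eq_prod {K : Type*} [Field K] [CharZero K] {n : ℕ} (v : Fin n → K) :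
    (binomialVandermonde v).det =
      ∏ p ∈ univ.filter (fun p : Fin n × Fin n => p.1 < p.2),
        (v p.2 - v p.1) / ((p.2.1 : K) - (p.1.1 : K)) := by
  have factorials_ne_zero : ∏ c : Fin n, ((c : ℕ).factorial : K) ≠ 0 :=
    prod_ne_zero_iff.2 fun c _ => Nat.cast_ne_zero.2 c.1.factorial_ne_zero
  have prod_factorial := det_vandermonde_eq_prod_factorial_mul fun i : Fin n => ((i : ℕ) : K)
  rw [det_binomialVandermonde_natCast, mul_one, det_vandermonde_eq_prod_pairs] at prod_factorial
  rw [prod_div_distrib, prod_factorial, ← det_vandermonde_eq_prod_pairs,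
    det_vandermonde_eq_prod_factorial_mul, mul_div_cancel_left₀ _ factorials_ne_zero]

lemma det_binomialVandermonde_succ {n : ℕ} (v : Fin (n + 1) → R) :
    (binomialVandermonde v).det = (Matrix.of fun i c : Fin n =>
      Ring.choose (v i.succ) ((c : ℕ) + 1) - Ring.choose (v i.castSucc) ((c : ℕ) + 1)).det := by
  let rowDifferences : Matrix (Fin (n + 1)) (Fin (n + 1)) R := Matrix.of fun i c =>
    Fin.cases (Ring.choose (v 0) (c : ℕ))
      (fun i => Ring.choose (v i.succ) (c : ℕ) - Ring.choose (v i.castSucc) (c : ℕ)) i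
  have det_eq : (binomialVandermonde v).det = rowDifferences.det :=
    Matrix.det_eq_of_forall_row_eq_smul_add_pred (fun _ => 1)
      (fun c => by simp [binomialVandermonde, rowDifferences])
      (fun i c => by simp [binomialVandermonde, rowDifferences])
  rw [det_eq, Matrix.det_succ_column_zero, Fin.sum_univ_succ]
  have corner : rowDifferences 0 0 = 1 := by simp [rowDifferences]
  have first_column (i : Fin n) : rowDifferences i.succ 0 = 0 := by simp [rowDifferences]
  simp only [corner, first_column, Fin.val_zero, pow_zero, mul_one, one_mul, mul_zero, zero_mul,
    sum_const_zero, add_zero]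
  rfl

lemma sum_Icc_choose_sub (z : R) (c : ℕ) {u v : ℤ} (huv : u ≤ v) :
    ∑ m ∈ Icc u v, Ring.choose (z - m) c =
      Ring.choose (z + 1 - u) (c + 1) - Ring.choose (z - v) (c + 1) := by
  have pascal (m : ℤ) : Ring.choose (z + 1 - m) (c + 1) =
      Ring.choose (z - m) c + Ring.choose (z - m) (c + 1) := by
    rw [← Ring.choose_succ_succ]
    congr 1
    ring
  induction v, huv using Int.leInduction with
  | base => simp [pascal]
  | succ v huv ih =>
    have shift : z + 1 - ((v + 1 : ℤ) : R) = z - v := by push_cast; ring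
    have split_choose := pascal (v + 1)
    rw [shift] at split_choose
    rw [← insert_Icc_right_eq_Icc_add_one (by omega), sum_insert (by simp), ih, split_choose]
    ring

lemma sum_det_binomialVandermonde {n : ℕ} {μ : Fin (n + 1) → ℤ} (hμ : Antitone μ) :
    ∑ ν ∈ Icc (Fin.tail μ) (Fin.init μ),
        (binomialVandermonde fun j => ((j : ℕ) : R) - ν j).det =
      (binomialVandermonde fun j => ((j : ℕ) : R) - μ j).det := by
  rw [det_binomialVandermonde_succ, Pi.Icc_eq]
  refine ((Matrix.detRowAlternating (n := Fin n) (R := R)).toMultilinearMap.map_sum_finset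
    (fun j m c => Ring.choose (((j : ℕ) : R) - (m : ℤ)) (c : ℕ)) _).symm.trans ?_
  refine congrArg Matrix.det (Matrix.ext fun j c => ?_)
  rw [Finset.sum_apply, Fin.init, Fin.tail, sum_Icc_choose_sub _ _ (hμ j.castSucc_lt_succ.le)]
  simp

end BinomialDeterminant

lemma antitone_of_mem_Icc_tail_init {n : ℕ} {α : Type*} [Preorder α] {μ : Fin (n + 1) → α}
    {ν : Fin n → α} (hμ : Antitone μ) (hν : ν ∈ Set.Icc (Fin.tail μ) (Fin.init μ)) :
    Antitone ν := by
  refine antitone_iff_forall_lt.2 fun i j hij => ?_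
  calc ν j ≤ μ j.castSucc := hν.2 j
    _ ≤ μ i.succ := hμ (Fin.succ_le_castSucc_iff.2 hij)
    _ ≤ ν i := hν.1 i

/-- The tuple `(μ_1, …, μ_n)`, stored in the positions `1, …, n` of a sequence vanishing elsewhere;
this is how `GTSet` encodes the rows of a pattern. -/
noncomputable def paddedRow {α : Type*} [Zero α] {n : ℕ} (μ : Fin n → α) : ℕ → α :=
  extend (fun j : Fin n => (j : ℕ) + 1) μ 0

lemma paddedRow_succ {α : Type*} [Zero α] {n : ℕ} (μ : Fin n → α) (j : Fin n) :
    paddedRow μ ((j : ℕ) + 1) = μ j :=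
  Injective.extend_apply (fun _ _ h => Fin.ext (Nat.succ_injective h)) μ 0 j

lemma paddedRow_zero (α : Type*) [Zero α] (n : ℕ) : paddedRow (0 : Fin n → α) = 0 :=
  extend_zero _

lemma paddedRow_eq_zero {α : Type*} [Zero α] {n : ℕ} (μ : Fin n → α) {j : ℕ}
    (hj : ¬(1 ≤ j ∧ j ≤ n)) : paddedRow μ j = 0 :=
  extend_apply' _ _ _ fun ⟨i, hi⟩ => hj (by omega)

namespace GTSet

variable {n : ℕ}

lemma row_eq_zero {μ : Fin n → ℝ} {x : ℕ → ℕ → ℝ} (hx : x ∈ GTSet n μ) {i : ℕ} (hi : n < i) :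
    x i = 0 := by
  funext j
  by_contra hij
  have := hx.1 i j hij
  omega

lemma top_row_eq {μ : Fin n → ℝ} {x : ℕ → ℕ → ℝ} (hx : x ∈ GTSet n μ) : x n = paddedRow μ := by
  funext j
  by_cases hj : 1 ≤ j ∧ j ≤ n
  · obtain ⟨j, rfl⟩ := Nat.exists_eq_add_of_le' hj.1
    exact (hx.2.2 ⟨j, hj.2⟩).trans (paddedRow_succ μ ⟨j, hj.2⟩).symm
  · rw [paddedRow_eq_zero μ hj]
    by_contra hij
    exact hj ⟨(hx.1 n j hij).1, (hx.1 n j hij).2.1⟩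

lemma update_paddedRow_mem {μ : Fin (n + 1) → ℝ} {ν : Fin n → ℝ}
    (hν : ν ∈ Set.Icc (Fin.tail μ) (Fin.init μ)) {y : ℕ → ℕ → ℝ} (hy : y ∈ GTSet n ν) :
    update y (n + 1) (paddedRow μ) ∈ GTSet (n + 1) μ := by
  refine ⟨fun i j hij => ?_, fun i j hj hji hi => ?_, fun j => ?_⟩
  · obtain rfl | hi := eq_or_ne i (n + 1)
    · rw [update_self] at hij
      by_contra hj
      exact hij (paddedRow_eq_zero μ fun h => hj ⟨h.1, h.2, le_rfl⟩)
    · rw [update_of_ne hi] at hij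
      have := hy.1 i j hij
      omega
  · rw [update_of_ne (by omega)]
    obtain rfl | hin := eq_or_ne i n
    · obtain ⟨j, rfl⟩ := Nat.exists_eq_add_of_le' hj
      let j' : Fin i := ⟨j, hji⟩
      rw [update_self, show y i (j + 1) = ν j' from hy.2.2 j',
        show paddedRow μ (j + 1) = μ j'.castSucc from paddedRow_succ μ j'.castSucc,
        show paddedRow μ (j + 1 + 1) = μ j'.succ from paddedRow_succ μ j'.succ]
      exact ⟨hν.2 j', hν.1 j'⟩
    · rw [update_of_ne (by omega)]
      exact hy.2.1 i j hj hji (by omega)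
  · rw [update_self, paddedRow_succ]

lemma row_mem_Icc {μ : Fin (n + 1) → ℝ} {x : ℕ → ℕ → ℝ} (hx : x ∈ GTSet (n + 1) μ) :
    (fun j : Fin n => x n (j + 1)) ∈ Set.Icc (Fin.tail μ) (Fin.init μ) := by
  have interlace (j : Fin n) := hx.2.1 n (j + 1) (by omega) (by omega) le_rfl
  refine ⟨fun j => ?_, fun j => ?_⟩
  · exact (hx.2.2 j.succ).symm.trans_le (interlace j).2
  · exact (interlace j).1.trans_eq (hx.2.2 j.castSucc)

lemma update_zero_mem {μ : Fin (n + 1) → ℝ} {x : ℕ → ℕ → ℝ} (hx : x ∈ GTSet (n + 1) μ) :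
    update x (n + 1) 0 ∈ GTSet n fun j => x n (j + 1) := by
  refine ⟨fun i j hij => ?_, fun i j hj hji hi => ?_, fun j => ?_⟩
  · obtain rfl | hi := eq_or_ne i (n + 1)
    · simp at hij
    · rw [update_of_ne hi] at hij
      have := hx.1 i j hij
      omega
  · rw [update_of_ne (by omega), update_of_ne (by omega)]
    exact hx.2.1 i j hj hji (by omega)
  · rw [update_of_ne (by omega)]

lemma update_zero_update_paddedRow {μ : Fin (n + 1) → ℝ} {x : ℕ → ℕ → ℝ}
    (hx : x ∈ GTSet (n + 1) μ) : update (update x (n + 1) 0) (n + 1) (paddedRow μ) = x := by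
  rw [update_idem, ← top_row_eq hx, update_eq_self]

lemma update_zero_update_eq_self {μ : Fin n → ℝ} {y : ℕ → ℕ → ℝ} (hy : y ∈ GTSet n μ)
    (r : ℕ → ℝ) : update (update y (n + 1) r) (n + 1) 0 = y := by
  rw [update_idem, ← row_eq_zero hy n.lt_succ_self, update_eq_self]

lemma size_zero_eq (μ : Fin 0 → ℝ) : GTSet 0 μ = {0} := by
  refine Set.eq_singleton_iff_unique_mem.2 ⟨⟨?_, ?_, ?_⟩, fun x hx => ?_⟩
  · exact fun i j hij => absurd rfl hij
  · intro i j _ _ hi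
    omega
  · exact fun j => j.elim0
  · funext i j
    by_contra hij
    have := hx.1 i j hij
    omega

lemma nonempty {μ : Fin n → ℝ} (hμ : Antitone μ) : (GTSet n μ).Nonempty := by
  induction n with
  | zero => exact size_zero_eq μ ▸ Set.singleton_nonempty 0
  | succ n ih =>
    obtain ⟨y, hy⟩ := ih (hμ.comp_monotone Fin.strictMono_castSucc.monotone)
    exact ⟨_, update_paddedRow_mem ⟨fun j => hμ j.castSucc_lt_succ.le, le_rfl⟩ hy⟩

lemma zero_top_row_eq (n : ℕ) : GTSet n 0 = 0 := by
  refine (nonempty (μ := 0) antitone_const).subset_singleton_iff.1 fun x hx => ?_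
  induction n generalizing x with
  | zero => exact (size_zero_eq 0).subset hx
  | succ n ih =>
    have next_row_eq_zero : (fun j : Fin n => x n (j + 1)) = 0 :=
      le_antisymm (row_mem_Icc hx).2 (row_mem_Icc hx).1
    have truncation_mem := update_zero_mem hx
    rw [next_row_eq_zero] at truncation_mem
    rw [Set.mem_singleton_iff, ← update_zero_update_paddedRow hx, ih _ truncation_mem,
      paddedRow_zero]
    exact update_eq_self (n + 1) 0

lemma smul_mem {μ : Fin n → ℝ} {x : ℕ → ℕ → ℝ} (hx : x ∈ GTSet n μ) {c : ℝ} (hc : 0 ≤ c) :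
    c • x ∈ GTSet n (c • μ) := by
  refine ⟨fun i j hij => hx.1 i j (right_ne_zero_of_mul hij), fun i j hj hji hi => ?_,
    fun j => congrArg (c * ·) (hx.2.2 j)⟩
  obtain ⟨h₁, h₂⟩ := hx.2.1 i j hj hji hi
  exact ⟨mul_le_mul_of_nonneg_left h₁ hc, mul_le_mul_of_nonneg_left h₂ hc⟩

lemma smul_eq {μ : Fin n → ℝ} (hμ : Antitone μ) {c : ℝ} (hc : 0 ≤ c) :
    c • GTSet n μ = GTSet n (c • μ) := by
  obtain rfl | hc := hc.eq_or_lt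
  · rw [Set.zero_smul_set (nonempty hμ), zero_smul, zero_top_row_eq]
  · refine Set.Subset.antisymm ?_ fun x hx => ?_
    · rintro _ ⟨x, hx, rfl⟩
      exact smul_mem hx hc.le
    · rw [Set.mem_smul_set_iff_inv_smul_mem₀ hc.ne']
      simpa only [inv_smul_smul₀ hc.ne'] using smul_mem hx (inv_nonneg.2 hc.le)

end GTSet

/-- The points of a set of arrays all of whose coordinates are integers; the coordinates remain
real numbers, as in `gtLatticePoints`. -/
def latticePoints (S : Set (ℕ → ℕ → ℝ)) : Set (ℕ → ℕ → ℝ) :=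
  {x ∈ S | ∀ i j : ℕ, ∃ m : ℤ, x i j = (m : ℝ)}

lemma gtLatticePoints_eq_latticePoints (n : ℕ) (lam : Fin n → ℕ) (k : ℕ) :
    gtLatticePoints n lam k = latticePoints ((k : ℝ) • GTSet n fun j => (lam j : ℝ)) :=
  rfl

/-- The integral Gelfand–Tsetlin patterns with top row `μ`, whose entries may be negative. -/
def integralGTPatterns (n : ℕ) (μ : Fin n → ℤ) : Set (ℕ → ℕ → ℝ) :=
  latticePoints (GTSet n fun j => (μ j : ℝ))

namespace integralGTPatterns

variable {n : ℕ}

lemma update_paddedRow_mem {μ : Fin (n + 1) → ℤ} {ν : Fin n → ℤ}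
    (hν : ν ∈ Icc (Fin.tail μ) (Fin.init μ)) {y : ℕ → ℕ → ℝ} (hy : y ∈ integralGTPatterns n ν) :
    update y (n + 1) (paddedRow fun j => (μ j : ℝ)) ∈ integralGTPatterns (n + 1) μ := by
  rw [Finset.mem_Icc] at hν
  refine ⟨GTSet.update_paddedRow_mem ⟨fun j => Int.cast_le.2 (hν.1 j),
    fun j => Int.cast_le.2 (hν.2 j)⟩ hy.1, fun i j => ?_⟩
  obtain rfl | hi := eq_or_ne i (n + 1)
  · rw [update_self]
    by_cases hj : ∃ a : Fin (n + 1), (a : ℕ) + 1 = j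
    · obtain ⟨a, rfl⟩ := hj
      exact ⟨μ a, paddedRow_succ _ a⟩
    · exact ⟨0, (extend_apply' _ _ _ hj).trans Int.cast_zero.symm⟩
  · rw [update_of_ne hi]
    exact hy.2 i j

lemma exists_update_zero_mem {μ : Fin (n + 1) → ℤ} {x : ℕ → ℕ → ℝ}
    (hx : x ∈ integralGTPatterns (n + 1) μ) :
    ∃ ν ∈ Icc (Fin.tail μ) (Fin.init μ), update x (n + 1) 0 ∈ integralGTPatterns n ν := by
  choose m hm using hx.2
  have next_row_eq : (fun j : Fin n => x n (j + 1)) = fun j : Fin n => (m n (j + 1) : ℝ) :=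
    funext fun j => hm n (j + 1)
  have interlace := next_row_eq ▸ GTSet.row_mem_Icc hx.1
  refine ⟨fun j => m n (j + 1), Finset.mem_Icc.2 ⟨fun j => Int.cast_le.1 (interlace.1 j),
    fun j => Int.cast_le.1 (interlace.2 j)⟩, next_row_eq ▸ GTSet.update_zero_mem hx.1,
    fun i j => ?_⟩
  obtain rfl | hi := eq_or_ne i (n + 1)
  · exact ⟨0, by simp⟩
  · rw [update_of_ne hi]
    exact hx.2 i j

lemma top_row_unique {μ ν : Fin n → ℤ} {x : ℕ → ℕ → ℝ} (hμ : x ∈ integralGTPatterns n μ)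
    (hν : x ∈ integralGTPatterns n ν) : μ = ν :=
  funext fun j => Int.cast_injective ((hμ.1.2.2 j).symm.trans (hν.1.2.2 j))

/-- Adding the top row `μ` to the integral patterns whose top row interlaces with `μ`. -/
noncomputable def addTopRow (μ : Fin (n + 1) → ℤ)
    (p : Σ ν : Icc (Fin.tail μ) (Fin.init μ), integralGTPatterns n ν) :
    integralGTPatterns (n + 1) μ :=
  ⟨update p.2.1 (n + 1) (paddedRow fun j => (μ j : ℝ)), update_paddedRow_mem p.1.2 p.2.2⟩

lemma addTopRow_bijective (μ : Fin (n + 1) → ℤ) : Bijective (addTopRow μ) := by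
  refine ⟨?_, fun ⟨x, hx⟩ => ?_⟩
  · rintro ⟨⟨ν, hν⟩, y, hy⟩ ⟨⟨ν', hν'⟩, y', hy'⟩ h
    have y_eq : y = y' := by
      have truncations_eq := congrArg (fun z => update z.1 (n + 1) 0) h
      simpa only [addTopRow, GTSet.update_zero_update_eq_self hy.1,
        GTSet.update_zero_update_eq_self hy'.1] using truncations_eq
    subst y_eq
    obtain rfl := top_row_unique hy hy'
    rfl
  · obtain ⟨ν, hν, hy⟩ := exists_update_zero_mem hx
    exact ⟨⟨⟨ν, hν⟩, _, hy⟩, Subtype.ext (GTSet.update_zero_update_paddedRow hx.1)⟩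

lemma size_zero_eq (μ : Fin 0 → ℤ) : integralGTPatterns 0 μ = {0} := by
  rw [integralGTPatterns, GTSet.size_zero_eq]
  exact Set.Subset.antisymm (fun x hx => hx.1)
    (Set.singleton_subset_iff.2 ⟨rfl, fun i j => ⟨0, by simp⟩⟩)

instance finite (μ : Fin n → ℤ) : Finite (integralGTPatterns n μ) := by
  induction n with
  | zero =>
    rw [size_zero_eq]
    infer_instance
  | succ n ih => exact Finite.of_surjective _ (addTopRow_bijective μ).surjective

lemma card_succ (μ : Fin (n + 1) → ℤ) :
    Nat.card (integralGTPatterns (n + 1) μ) =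
      ∑ ν ∈ Icc (Fin.tail μ) (Fin.init μ), Nat.card (integralGTPatterns n ν) := by
  rw [← Nat.card_eq_of_bijective _ (addTopRow_bijective μ), Nat.card_sigma]
  exact sum_coe_sort _ fun ν => Nat.card (integralGTPatterns n ν)

lemma card_eq_det {R : Type*} [CommRing R] [BinomialRing R] {μ : Fin n → ℤ} (hμ : Antitone μ) :
    (Nat.card (integralGTPatterns n μ) : R) =
      (binomialVandermonde fun j => ((j : ℕ) : R) - μ j).det := by
  induction n with
  | zero => simp [size_zero_eq]
  | succ n ih =>
    rw [card_succ, Nat.cast_sum, ← sum_det_binomialVandermonde hμ]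
    exact sum_congr rfl fun ν hν => ih (antitone_of_mem_Icc_tail_init hμ (Finset.mem_Icc.1 hν))

theorem ncard_eq_prod {μ : Fin n → ℤ} (hμ : Antitone μ) :
    ((integralGTPatterns n μ).ncard : ℚ) =
      ∏ p ∈ univ.filter (fun p : Fin n × Fin n => p.1 < p.2),
        ((μ p.1 : ℚ) - (μ p.2 : ℚ) + (p.2.1 : ℚ) - (p.1.1 : ℚ)) /
          ((p.2.1 : ℚ) - (p.1.1 : ℚ)) := by
  rw [← Nat.card_coe_set_eq, card_eq_det hμ, det_binomialVandermonde_eq_prod]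
  refine prod_congr rfl fun p _ => ?_
  congr 1
  ring

end integralGTPatterns

lemma latticePoints_smul_GTSet {n : ℕ} {μ : Fin n → ℤ} (hμ : Antitone μ) (k : ℕ) :
    latticePoints ((k : ℝ) • GTSet n fun j => (μ j : ℝ)) = integralGTPatterns n (k • μ) := by
  have hμ_real : Antitone fun j => (μ j : ℝ) := Int.cast_mono.comp_antitone hμ
  rw [GTSet.smul_eq hμ_real k.cast_nonneg, integralGTPatterns]
  congr 2
  funext j
  simp

section EhrhartPolynomial

open Polynomial

/-- The Ehrhart polynomial of `GTSet n lam` for a weakly decreasing integer tuple `lam`. Every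
linear factor is scaled to constant term `1`, which makes its coefficients visibly non-negative. -/
noncomputable def gtEhrhartPolynomial {n : ℕ} (lam : Fin n → ℤ) : ℚ[X] :=
  ∏ p ∈ univ.filter (fun p : Fin n × Fin n => p.1 < p.2),
    (C (((lam p.1 : ℚ) - (lam p.2 : ℚ)) / ((p.2.1 : ℚ) - (p.1.1 : ℚ))) * X + 1)

lemma eval_gtEhrhartPolynomial {n : ℕ} (lam : Fin n → ℤ) (t : ℚ) :
    (gtEhrhartPolynomial lam).eval t =
      ∏ p ∈ univ.filter (fun p : Fin n × Fin n => p.1 < p.2),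
        (t * ((lam p.1 : ℚ) - (lam p.2 : ℚ)) + (p.2.1 : ℚ) - (p.1.1 : ℚ)) /
          ((p.2.1 : ℚ) - (p.1.1 : ℚ)) := by
  rw [gtEhrhartPolynomial, eval_prod]
  refine prod_congr rfl fun p hp => ?_
  have index_lt : (p.1.1 : ℚ) < p.2.1 := Nat.cast_lt.2 (mem_filter.1 hp).2
  have index_sub_ne_zero : (p.2.1 : ℚ) - p.1.1 ≠ 0 := (sub_pos.2 index_lt).ne'
  simp only [eval_add, eval_mul, eval_C, eval_X, eval_one]
  field_simp
  ring

lemma coeff_prod_nonneg {ι R : Type*} [CommSemiring R] [PartialOrder R] [IsOrderedRing R]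
    {s : Finset ι} {f : ι → R[X]} (hf : ∀ i ∈ s, ∀ m, 0 ≤ (f i).coeff m) (m : ℕ) :
    0 ≤ (∏ i ∈ s, f i).coeff m := by
  refine prod_induction f (fun q => ∀ m, 0 ≤ q.coeff m) (fun p q hp hq m => ?_) (fun m => ?_) hf m
  · rw [coeff_mul]
    exact sum_nonneg fun _ _ => mul_nonneg (hp _) (hq _)
  · rw [coeff_one]
    split_ifs <;> simp

lemma coeff_gtEhrhartPolynomial_nonneg {n : ℕ} {lam : Fin n → ℤ} (hlam : Antitone lam) (m : ℕ) :
    0 ≤ (gtEhrhartPolynomial lam).coeff m := by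
  refine coeff_prod_nonneg (fun p hp m => ?_) m
  have hp : p.1 < p.2 := (mem_filter.1 hp).2
  have slope_nonneg : 0 ≤ ((lam p.1 : ℚ) - lam p.2) / ((p.2.1 : ℚ) - p.1.1) :=
    div_nonneg (sub_nonneg.2 (Int.cast_le.2 (hlam hp.le)))
      (sub_nonneg.2 (Nat.cast_le.2 (Fin.le_def.1 hp.le)))
  rw [coeff_add, coeff_C_mul, coeff_X, coeff_one]
  refine add_nonneg (mul_nonneg slope_nonneg ?_) ?_ <;> split_ifs <;> simp

end EhrhartPolynomial

theorem gtSet_ehrhart_general (n : ℕ) (lam : Fin n → ℤ) (hlam : Antitone lam) :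
    (∀ k : ℕ,
      ((latticePoints ((k : ℝ) • GTSet n fun j => (lam j : ℝ))).ncard : ℚ) =
        ∏ p ∈ univ.filter (fun p : Fin n × Fin n => p.1 < p.2),
          ((k : ℚ) * ((lam p.1 : ℚ) - (lam p.2 : ℚ)) + (p.2.1 : ℚ) - (p.1.1 : ℚ)) /
            ((p.2.1 : ℚ) - (p.1.1 : ℚ))) ∧
    ∃ p : Polynomial ℚ, (∀ i : ℕ, 0 ≤ p.coeff i) ∧
      ∀ k : ℕ, p.eval (k : ℚ) =
        ((latticePoints ((k : ℝ) • GTSet n fun j => (lam j : ℝ))).ncard : ℚ) := by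
  have count (k : ℕ) :
      ((latticePoints ((k : ℝ) • GTSet n fun j => (lam j : ℝ))).ncard : ℚ) =
        (gtEhrhartPolynomial lam).eval (k : ℚ) := by
    rw [latticePoints_smul_GTSet hlam, eval_gtEhrhartPolynomial,
      integralGTPatterns.ncard_eq_prod (μ := k • lam) fun i j hij =>
        nsmul_le_nsmul_right (hlam hij) k]
    simp [mul_sub]
  exact ⟨fun k => (count k).trans (eval_gtEhrhartPolynomial lam k), gtEhrhartPolynomial lam,
    coeff_gtEhrhartPolynomial_nonneg hlam, fun k => (count k).symm⟩

/-- For every `k ≥ 0`, the number of lattice points of `k · GT(λ)` equals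
`∏_{i<j} (k(λ_i − λ_j) + j − i)/(j − i)`; in particular the Ehrhart counting
function of `GT(λ)` is a polynomial in `k` with non-negative coefficients. -/
theorem gtSet_ehrhart (n : ℕ) (hn : 1 ≤ n) (lam : Fin n → ℕ) (hlam : Antitone lam) :
    (∀ k : ℕ,
      (Set.ncard (gtLatticePoints n lam k) : ℚ) =
        ∏ p ∈ Finset.univ.filter (fun p : Fin n × Fin n => p.1 < p.2),
          ((k : ℚ) * ((lam p.1 : ℚ) - (lam p.2 : ℚ)) + (p.2.1 : ℚ) - (p.1.1 : ℚ)) /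
            ((p.2.1 : ℚ) - (p.1.1 : ℚ))) ∧
    ∃ p : Polynomial ℚ, (∀ i : ℕ, 0 ≤ p.coeff i) ∧
      ∀ k : ℕ, p.eval (k : ℚ) = (Set.ncard (gtLatticePoints n lam k) : ℚ) := by
  simpa only [gtLatticePoints_eq_latticePoints, Int.cast_natCast] using
    gtSet_ehrhart_general n (fun j => (lam j : ℤ)) (Nat.mono_cast.comp_antitone hlam)
end

section
/- Let λ and μ be integer partitions of the same size with at most n parts. Then there exists a polynomial p ∈ ℚ[x] such that for every positive integer k, the stretched Kostka coefficient K_{kλ, kμ} — the number of semistandard Young tableaux of shape kλ with entries in {1,…,n} having exactly kμ_i entries equal to i for each i — equals p(k). In particular, the lattice-point counting function of the rational polytope GT(λ, μ) is a genuine polynomial in k, not merely a quasipolynomial. -/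
/-- `T : ℕ → ℕ → ℕ` (rows and columns indexed from `0`) is a semistandard Young
tableau of shape `lam` (a partition with at most `n` parts) with entries in `{1, …, n}`. -/
def IsSSYT (n : ℕ) (lam : Fin n → ℕ) (T : ℕ → ℕ → ℕ) : Prop :=
  (∀ i j, T i j ≠ 0 → ∃ h : i < n, j < lam ⟨i, h⟩) ∧
  (∀ (i : Fin n) (j : ℕ), j < lam i → 1 ≤ T i.1 j ∧ T i.1 j ≤ n) ∧
  (∀ (i : Fin n) (j₁ j₂ : ℕ), j₁ ≤ j₂ → j₂ < lam i → T i.1 j₁ ≤ T i.1 j₂) ∧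
  (∀ (i₁ i₂ : Fin n) (j : ℕ), i₁ < i₂ → j < lam i₂ → T i₁.1 j < T i₂.1 j)

/-- The number of entries of the tableau `T` of shape `lam` equal to `v`. -/
def contentCount (n : ℕ) (lam : Fin n → ℕ) (T : ℕ → ℕ → ℕ) (v : ℕ) : ℕ :=
  ∑ i : Fin n, ((Finset.range (lam i)).filter (fun j => T i.1 j = v)).card

/-!
By Weyl's character formula, the Schur polynomial `s_λ` is the sum over all permutations `w` of
`w (x ^ λ * ∏ i < j, (1 - x_j / x_i)⁻¹)`. Send `x_i` to the monomial `t ^ e_i` in the field of Hahn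
series with exponents in `ℤ ^ n`, linearly ordered. There each summand can be expanded on its own,
and `K_{kλ,kμ}` becomes a sum over `w` of coefficients of
`∏ i < j, (1 - t ^ (e_{w j} - e_{w i}))⁻¹` at the multiples `k • (μ - w λ)` of a fixed exponent.

The dependence on `k` is polynomial by induction on the set of indices involved. If `i` is the
largest one, then partial fractions reduce the product to combinations of powers of a single
`(1 - t ^ (e_i - e_j))⁻¹` at a time, with coefficients not involving `e_i`, and such a power
contributes a binomial coefficient in the `e_i`-coordinate of the exponent.
-/

namespace IsSSYT

variable {n : ℕ} {lam : Fin n → ℕ} {T : ℕ → ℕ → ℕ}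

theorem ne_zero_iff (hT : IsSSYT n lam T) (i : Fin n) (j : ℕ) : T i j ≠ 0 ↔ j < lam i :=
  ⟨fun h => (hT.1 i j h).2, fun h => Nat.one_le_iff_ne_zero.1 (hT.2.1 i j h).1⟩

theorem lt_of_ne_zero (hT : IsSSYT n lam T) {i j : ℕ} (h : T i j ≠ 0) : i < n :=
  (hT.1 i j h).1

theorem entry_le (hT : IsSSYT n lam T) (i j : ℕ) : T i j ≤ n := by
  obtain h | h := eq_or_ne (T i j) 0
  · exact h ▸ Nat.zero_le n
  · obtain ⟨hi, hj⟩ := hT.1 i j h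
    exact (hT.2.1 ⟨i, hi⟩ j hj).2

theorem row_le (hT : IsSSYT n lam T) {i j₁ j₂ : ℕ} (hj : j₁ ≤ j₂) (h : T i j₂ ≠ 0) :
    T i j₁ ≠ 0 ∧ T i j₁ ≤ T i j₂ := by
  obtain ⟨hi, hj₂⟩ := hT.1 i j₂ h
  exact ⟨(hT.ne_zero_iff ⟨i, hi⟩ j₁).2 (hj.trans_lt hj₂), hT.2.2.1 ⟨i, hi⟩ j₁ j₂ hj hj₂⟩

theorem col_lt (hT : IsSSYT n lam T) {i₁ i₂ j : ℕ} (hi : i₁ < i₂) (h : T i₂ j ≠ 0) :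
    T i₁ j < T i₂ j := by
  obtain ⟨hi₂, hj⟩ := hT.1 i₂ j h
  exact hT.2.2.2 ⟨i₁, hi.trans hi₂⟩ ⟨i₂, hi₂⟩ j hi hj

theorem shape_eq (hT : IsSSYT n lam T) {nu : Fin n → ℕ} (hT' : IsSSYT n nu T) : lam = nu :=
  funext fun i => eq_of_forall_lt_iff fun j => by rw [← hT.ne_zero_iff, ← hT'.ne_zero_iff]

theorem lt_entry (hT : IsSSYT n lam T) (hlam : Antitone lam) {i j : ℕ} (h : T i j ≠ 0) :
    i < T i j := by
  induction i with
  | zero => exact Nat.pos_of_ne_zero h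
  | succ i ih =>
    obtain ⟨hi, hj⟩ := hT.1 (i + 1) j h
    have habove : T i j ≠ 0 := (hT.ne_zero_iff ⟨i, i.lt_succ_self.trans hi⟩ j).2
      (hj.trans_le (hlam (Nat.le_succ i)))
    exact Nat.lt_of_le_of_lt (ih habove) (hT.col_lt i.lt_succ_self h)

end IsSSYT

namespace Kostka

/-! ### Tableaux and the branching rule -/

section Interlacing

variable {n : ℕ} {lam : Fin (n + 1) → ℕ} {nu : Fin n → ℕ}

/-- The sequences `nu` with `lam i ≥ nu i ≥ lam (i + 1)`, i.e. the rows that can follow `lam` in a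
Gelfand–Tsetlin pattern. -/
def interlacing (lam : Fin (n + 1) → ℕ) : Finset (Fin n → ℕ) :=
  Fintype.piFinset fun i => Finset.Icc (lam i.succ) (lam i.castSucc)

theorem mem_interlacing :
    nu ∈ interlacing lam ↔ ∀ i, lam i.succ ≤ nu i ∧ nu i ≤ lam i.castSucc := by
  simp only [interlacing, Fintype.mem_piFinset, Finset.mem_Icc]

theorem interlacing_zero : interlacing (0 : Fin (n + 1) → ℕ) = {0} := by
  ext nu
  simp [mem_interlacing, funext_iff]

theorem antitone_of_mem_interlacing (hnu : nu ∈ interlacing lam) : Antitone nu := by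
  rw [mem_interlacing] at hnu
  cases n with
  | zero => exact fun i => i.elim0
  | succ n => exact Fin.antitone_iff_succ_le.2 fun i => (hnu _).2.trans (hnu i.castSucc).1

theorem sum_sub_sum_of_mem_interlacing (hnu : nu ∈ interlacing lam) :
    ∑ i, lam i - ∑ i, nu i = ∑ i, (lam i.castSucc - nu i) + lam (Fin.last n) := by
  have hle i : nu i ≤ lam i.castSucc := (mem_interlacing.1 hnu i).2
  rw [Finset.sum_tsub_distrib _ fun i _ => hle i, Fin.sum_univ_castSucc,
    Nat.sub_add_comm (Finset.sum_le_sum fun i _ => hle i)]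

end Interlacing

section Tableaux

variable {n : ℕ} {lam : Fin (n + 1) → ℕ} {nu : Fin n → ℕ} {T : ℕ → ℕ → ℕ}

/-- Fills the cells of the diagram of `lam` that are empty in `T` with the letter `n + 1`. -/
def extendTableau (lam : Fin (n + 1) → ℕ) (T : ℕ → ℕ → ℕ) : ℕ → ℕ → ℕ := fun i j =>
  if T i j = 0 ∧ ∃ h : i < n + 1, j < lam ⟨i, h⟩ then n + 1 else T i j

/-- Empties the cells of `T` whose entry exceeds `n`. -/
def restrictTableau (n : ℕ) (T : ℕ → ℕ → ℕ) : ℕ → ℕ → ℕ := fun i j =>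
  if T i j ≤ n then T i j else 0

theorem extendTableau_of_ne_zero {i j : ℕ} (h : T i j ≠ 0) :
    extendTableau lam T i j = T i j :=
  if_neg fun h' => h h'.1

theorem extendTableau_of_eq_zero {i : Fin (n + 1)} {j : ℕ} (h : T i j = 0) (hj : j < lam i) :
    extendTableau lam T i j = n + 1 :=
  if_pos ⟨h, i.2, hj⟩

theorem extendTableau_eq_or (lam : Fin (n + 1) → ℕ) (T : ℕ → ℕ → ℕ) (i j : ℕ) :
    extendTableau lam T i j = T i j ∨ T i j = 0 ∧ extendTableau lam T i j = n + 1 := by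
  unfold extendTableau
  split_ifs with h
  · exact .inr ⟨h.1, rfl⟩
  · exact .inl rfl

theorem restrictTableau_extendTableau (hT : IsSSYT n nu T) :
    restrictTableau n (extendTableau lam T) = T := by
  funext i j
  have hle := hT.entry_le i j
  have hext := extendTableau_eq_or lam T i j
  grind [restrictTableau]

theorem extendTableau_restrictTableau (hT : IsSSYT (n + 1) lam T) :
    extendTableau lam (restrictTableau n T) = T := by
  funext i j
  have hle := hT.entry_le i j
  have hshape := hT.1 i j
  have hpos : ∀ h : i < n + 1, j < lam ⟨i, h⟩ → T i j ≠ 0 := fun h => (hT.ne_zero_iff ⟨i, h⟩ j).2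
  grind [restrictTableau, extendTableau]

theorem isSSYT_extendTableau (hlam : Antitone lam) (hnu : nu ∈ interlacing lam)
    (hT : IsSSYT n nu T) : IsSSYT (n + 1) lam (extendTableau lam T) := by
  rw [mem_interlacing] at hnu
  refine ⟨fun i j h => ?_, fun i j hj => ?_, fun i j₁ j₂ hj hj₂ => ?_, fun i₁ i₂ j hi hj => ?_⟩
  · by_cases hTij : T i j = 0
    · by_contra hout
      exact h ((if_neg fun h' => hout h'.2).trans hTij)
    · obtain ⟨hi, hj⟩ := hT.1 i j hTij
      exact ⟨hi.trans n.lt_succ_self, hj.trans_le (hnu ⟨i, hi⟩).2⟩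
  · obtain hTij | hTij := eq_or_ne (T i j) 0
    · simp [extendTableau_of_eq_zero hTij hj]
    · rw [extendTableau_of_ne_zero hTij]
      exact ⟨Nat.one_le_iff_ne_zero.2 hTij, (hT.entry_le _ _).trans n.le_succ⟩
  · obtain h₂ | h₂ := eq_or_ne (T i j₂) 0
    · rw [extendTableau_of_eq_zero h₂ hj₂]
      obtain h₁ | h₁ := eq_or_ne (T i j₁) 0
      · rw [extendTableau_of_eq_zero h₁ (hj.trans_lt hj₂)]
      · rw [extendTableau_of_ne_zero h₁]
        exact (hT.entry_le _ _).trans n.le_succ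
    · obtain ⟨h₁, hle⟩ := hT.row_le hj h₂
      rwa [extendTableau_of_ne_zero h₁, extendTableau_of_ne_zero h₂]
  · obtain ⟨i, rfl⟩ := Fin.exists_castSucc_eq.2 (Fin.ne_last_of_lt hi)
    have h₁ : T i j ≠ 0 := (hT.ne_zero_iff i j).2
      (hj.trans_le ((hlam (Fin.castSucc_lt_iff_succ_le.1 hi)).trans (hnu i).1))
    rw [Fin.val_castSucc, extendTableau_of_ne_zero h₁]
    obtain h₂ | h₂ := eq_or_ne (T i₂ j) 0
    · rw [extendTableau_of_eq_zero h₂ hj]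
      exact Nat.lt_succ_of_le (hT.entry_le _ _)
    · rw [extendTableau_of_ne_zero h₂]
      exact hT.col_lt hi h₂

theorem exists_forall_restrictTableau_ne_zero_iff (hT : IsSSYT (n + 1) lam T) (i : ℕ) :
    ∃ a, ∀ j, restrictTableau n T i j ≠ 0 ↔ j < a := by
  have hrow {j₁ j₂ : ℕ} (hj : j₁ ≤ j₂) (h : restrictTableau n T i j₂ ≠ 0) :
      restrictTableau n T i j₁ ≠ 0 := by
    have hle := hT.row_le (i := i) hj
    grind [restrictTableau]
  obtain huniv | ⟨a, ha⟩ := IsLowerSet.eq_univ_or_Iio (s := {j | restrictTableau n T i j ≠ 0})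
    fun _ _ => hrow
  · have hne (j : ℕ) : T i j ≠ 0 := by
      have hj : j ∈ {j | restrictTableau n T i j ≠ 0} := huniv ▸ Set.mem_univ j
      grind [restrictTableau]
    obtain ⟨hi, -⟩ := hT.1 i 0 (hne 0)
    exact absurd ((hT.ne_zero_iff ⟨i, hi⟩ _).1 (hne (lam ⟨i, hi⟩))) (lt_irrefl _)
  · exact ⟨a, Set.ext_iff.1 ha⟩

theorem exists_isSSYT_restrictTableau (hlam : Antitone lam) (hT : IsSSYT (n + 1) lam T) :
    ∃ nu ∈ interlacing lam, IsSSYT n nu (restrictTableau n T) := by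
  choose a ha using exists_forall_restrictTableau_ne_zero_iff hT
  have hentry {i j : ℕ} (h : restrictTableau n T i j ≠ 0) :
      T i j ≠ 0 ∧ T i j ≤ n ∧ restrictTableau n T i j = T i j := by
    grind [restrictTableau]
  refine ⟨fun i => a i, mem_interlacing.2 fun i => ⟨?_, ?_⟩, ?_, ?_, ?_, ?_⟩
  · refine le_of_forall_lt fun j hj => (ha i j).1 ?_
    have hle := hT.entry_le (i + 1) j
    have hne : T (i + 1) j ≠ 0 := (hT.ne_zero_iff i.succ j).2 hj
    have hne' : T i j ≠ 0 := (hT.ne_zero_iff i.castSucc j).2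
      (hj.trans_le (hlam (Fin.castSucc_le_succ i)))
    have hlt := hT.col_lt (Nat.lt_succ_self i) hne
    grind [restrictTableau]
  · exact le_of_forall_lt fun j hj =>
      (hT.ne_zero_iff i.castSucc j).1 (hentry ((ha i j).2 hj)).1
  · intro i j h
    obtain ⟨hne, hle, -⟩ := hentry h
    exact ⟨(hT.lt_entry hlam hne).trans_le hle, (ha i j).1 h⟩
  · intro i j hj
    obtain ⟨hne, hle, heq⟩ := hentry ((ha i j).2 hj)
    exact heq ▸ ⟨Nat.one_le_iff_ne_zero.2 hne, hle⟩
  · intro i j₁ j₂ hj hj₂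
    obtain ⟨hne, -, heq⟩ := hentry ((ha i j₂).2 hj₂)
    obtain ⟨-, -, heq₁⟩ := hentry ((ha i j₁).2 (hj.trans_lt hj₂))
    exact heq ▸ heq₁ ▸ (hT.row_le hj hne).2
  · intro i₁ i₂ j hi hj
    obtain ⟨hne, -, heq⟩ := hentry ((ha i₂ j).2 hj)
    have hle : restrictTableau n T i₁ j ≤ T i₁ j := by grind [restrictTableau]
    exact heq ▸ hle.trans_lt (hT.col_lt hi hne)

theorem contentCount_extendTableau (hnu : nu ∈ interlacing lam) (hT : IsSSYT n nu T)
    (v : Fin n) :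
    contentCount (n + 1) lam (extendTableau lam T) (v + 1) = contentCount n nu T (v + 1) := by
  have hletter (i j : ℕ) : extendTableau lam T i j = v + 1 ↔ T i j = v + 1 := by
    have hext := extendTableau_eq_or lam T i j
    have hv := v.2
    grind
  have hlast : {j ∈ Finset.range (lam (Fin.last n)) | T n j = v + 1} = ∅ :=
    Finset.filter_eq_empty_iff.2 fun j _ h =>
      (hT.lt_of_ne_zero (h.trans_ne (Nat.succ_ne_zero _))).false
  simp only [contentCount, hletter, Fin.sum_univ_castSucc, Fin.val_last, hlast,
    Finset.card_empty, add_zero, Fin.val_castSucc]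
  refine Finset.sum_congr rfl fun i _ => congr_arg _ (Finset.ext fun j => ?_)
  have hle := (mem_interlacing.1 hnu i).2
  have hshape := hT.ne_zero_iff i j
  simp only [Finset.mem_filter, Finset.mem_range]
  grind

theorem contentCount_extendTableau_last (hnu : nu ∈ interlacing lam) (hT : IsSSYT n nu T) :
    contentCount (n + 1) lam (extendTableau lam T) (n + 1) = ∑ i, lam i - ∑ i, nu i := by
  have hletter (i : Fin (n + 1)) : {j ∈ Finset.range (lam i) | extendTableau lam T i j = n + 1} =
      {j ∈ Finset.range (lam i) | T i j = 0} := by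
    refine Finset.filter_congr fun j hj => ?_
    have hle := hT.entry_le i j
    have hext := extendTableau_eq_or lam T i j
    have hj' := Finset.mem_range.1 hj
    grind [extendTableau_of_eq_zero]
  have hrow (i : Fin n) :
      {j ∈ Finset.range (lam i.castSucc) | T i j = 0} = Finset.Ico (nu i) (lam i.castSucc) := by
    ext j
    have hshape := hT.ne_zero_iff i j
    simp only [Finset.mem_filter, Finset.mem_range, Finset.mem_Ico]
    grind
  have hlast : {j ∈ Finset.range (lam (Fin.last n)) | T n j = 0} =
      Finset.range (lam (Fin.last n)) :=
    Finset.filter_true_of_mem fun j _ => by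
      by_contra h
      exact (hT.lt_of_ne_zero h).false
  rw [sum_sub_sum_of_mem_interlacing hnu]
  simp only [contentCount, hletter, Fin.sum_univ_castSucc, Fin.val_castSucc, hrow, Fin.val_last,
    hlast, Nat.card_Ico, Finset.card_range]

open Classical in
/-- For antitone `lam`, the semistandard tableaux of shape `lam` with entries in `{1, …, n}`, built
one letter at a time. -/
noncomputable def tableaux : {n : ℕ} → (Fin n → ℕ) → Finset (ℕ → ℕ → ℕ)
  | 0, _ => {0}
  | _ + 1, lam => ((interlacing lam).sigma tableaux).image fun p => extendTableau lam p.2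

theorem mem_tableaux {n : ℕ} {lam : Fin n → ℕ} (hlam : Antitone lam) {T : ℕ → ℕ → ℕ} :
    T ∈ tableaux lam ↔ IsSSYT n lam T := by
  induction n generalizing T with
  | zero =>
    simp only [tableaux, Finset.mem_singleton, IsSSYT, Nat.not_lt_zero, IsEmpty.exists_iff,
      IsEmpty.forall_iff, and_true, imp_false, not_not, funext_iff, Pi.zero_apply]
  | succ n ih =>
    simp only [tableaux, Finset.mem_image, Finset.mem_sigma, Sigma.exists]
    constructor
    · rintro ⟨nu, T, ⟨hnu, hT⟩, rfl⟩
      exact isSSYT_extendTableau hlam hnu ((ih (antitone_of_mem_interlacing hnu)).1 hT)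
    · intro hT
      obtain ⟨nu, hnu, hT'⟩ := exists_isSSYT_restrictTableau hlam hT
      exact ⟨nu, _, ⟨hnu, (ih (antitone_of_mem_interlacing hnu)).2 hT'⟩,
        extendTableau_restrictTableau hT⟩

/-- The Schur polynomial of shape `lam`, evaluated at `x`. -/
noncomputable def schur {R : Type*} [CommSemiring R] {n : ℕ} (x : Fin n → R) (lam : Fin n → ℕ) :
    R :=
  ∑ T ∈ tableaux lam, ∏ i, x i ^ contentCount n lam T (i + 1)

theorem schur_succ {R : Type*} [CommSemiring R] (x : Fin (n + 1) → R) (lam : Fin (n + 1) → ℕ) :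
    schur x lam = ∑ nu ∈ interlacing lam,
      x (Fin.last n) ^ (∑ i, lam i - ∑ i, nu i) * schur (x ∘ Fin.castSucc) nu := by
  classical
  have hSSYT {nu T} (hnu : nu ∈ interlacing lam) (hT : T ∈ tableaux nu) : IsSSYT n nu T :=
    (mem_tableaux (antitone_of_mem_interlacing hnu)).1 hT
  have hinj : Set.InjOn (fun p : (_ : Fin n → ℕ) × (ℕ → ℕ → ℕ) => extendTableau lam p.2)
      ((interlacing lam).sigma tableaux) := by
    rintro ⟨nu, T⟩ hp ⟨nu', T'⟩ hp' (heq : extendTableau lam T = extendTableau lam T')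
    have hT : IsSSYT n nu T := And.elim hSSYT (Finset.mem_sigma.1 hp)
    have hT' : IsSSYT n nu' T' := And.elim hSSYT (Finset.mem_sigma.1 hp')
    obtain rfl : T = T' := by
      rw [← restrictTableau_extendTableau (lam := lam) hT, heq, restrictTableau_extendTableau hT']
    obtain rfl := hT.shape_eq hT'
    rfl
  rw [schur, tableaux, Finset.sum_image hinj, Finset.sum_sigma]
  refine Finset.sum_congr rfl fun nu hnu => ?_
  rw [schur, Finset.mul_sum]
  refine Finset.sum_congr rfl fun T hT => ?_
  simp only [Fin.prod_univ_castSucc, Fin.val_castSucc, Fin.val_last,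
    contentCount_extendTableau hnu (hSSYT hnu hT),
    contentCount_extendTableau_last hnu (hSSYT hnu hT), Function.comp_apply, mul_comm]

end Tableaux

open Classical in
/-- The number of semistandard tableaux of shape `lam` and content `mu`. -/
noncomputable def kostka {n : ℕ} (lam mu : Fin n → ℕ) : ℕ :=
  {T ∈ tableaux lam | ∀ i : Fin n, contentCount n lam T (i + 1) = mu i}.card

theorem ncard_isSSYT_eq_kostka {n : ℕ} {lam : Fin n → ℕ} (hlam : Antitone lam)
    (mu : Fin n → ℕ) :
    Set.ncard {T | IsSSYT n lam T ∧ ∀ i : Fin n, contentCount n lam T (i + 1) = mu i} =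
      kostka lam mu := by
  rw [kostka, ← Set.ncard_coe_finset]
  simp only [Finset.coe_filter, mem_tableaux hlam]

/-! ### Weyl's character formula -/

section Determinants

variable {R : Type*} [CommRing R]

theorem det_eq_of_forall_row_eq_smul_add_succ {n : ℕ} {A B : Matrix (Fin (n + 1)) (Fin (n + 1)) R}
    (c : Fin n → R) (A_last : ∀ j, A (Fin.last n) j = B (Fin.last n) j)
    (A_castSucc : ∀ (i : Fin n) j, A i.castSucc j = B i.castSucc j + c i * A i.succ j) :
    A.det = B.det := by
  rw [← Matrix.det_submatrix_equiv_self Fin.revPerm A,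
    ← Matrix.det_submatrix_equiv_self Fin.revPerm B]
  refine Matrix.det_eq_of_forall_row_eq_smul_add_pred (c ∘ Fin.rev) (fun j => ?_) fun i j => ?_
  · simp [A_last]
  · simp [Fin.rev_succ, Fin.rev_castSucc, A_castSucc]

theorem det_of_sum_finset {ι κ : Type*} [Fintype ι] [DecidableEq ι] (s : ι → Finset κ)
    (a : ι → κ → R) (f : ι → κ → ι → R) :
    (Matrix.of fun i j => ∑ m ∈ s i, a i m * f i m j).det =
      ∑ m ∈ Fintype.piFinset s, (∏ i, a i (m i)) * (Matrix.of fun i => f i (m i)).det := by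
  have hrows : (Matrix.of fun i j => ∑ m ∈ s i, a i m * f i m j) =
      fun i => ∑ m ∈ s i, fun j => a i m * f i m j := by
    ext i j
    simp
  rw [hrows]
  refine (Matrix.detRowAlternating.toMultilinearMap.map_sum_finset
    (fun i m j => a i m * f i m j) s).trans (Finset.sum_congr rfl fun m _ => ?_)
  exact Matrix.det_mul_column (fun i => a i (m i)) (Matrix.of fun i => f i (m i))

theorem pow_sub_pow_mul_pow_eq_mul_sum_Icc (x y : R) {a b : ℕ} (hab : a ≤ b) (r : ℕ) :
    x ^ (b + (r + 1)) - y ^ (b - a + 1) * x ^ (a + r) =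
      (x - y) * ∑ m ∈ Finset.Icc a b, y ^ (b - m) * x ^ (m + r) := by
  obtain ⟨d, rfl⟩ := Nat.exists_eq_add_of_le hab
  have hsum : ∑ m ∈ Finset.Icc a (a + d), y ^ (a + d - m) * x ^ (m + r) =
      x ^ (a + r) * ∑ i ∈ Finset.range (d + 1), x ^ i * y ^ (d + 1 - 1 - i) := by
    rw [← Finset.Ico_add_one_right_eq_Icc, Finset.sum_Ico_eq_sum_range, Finset.mul_sum,
      add_assoc, Nat.add_sub_cancel_left]
    refine Finset.sum_congr rfl fun i _ => ?_
    rw [Nat.add_sub_add_left, Nat.add_sub_cancel]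
    ring
  rw [hsum, Nat.add_sub_cancel_left]
  linear_combination -x ^ (a + r) * (Commute.all x y).mul_geom_sum₂ (d + 1)

/-- The matrix `x j ^ (lam i + n - 1 - i)` of Weyl's character formula in type `A`. -/
def alternant {n : ℕ} (x : Fin n → R) (lam : Fin n → ℕ) : Matrix (Fin n) (Fin n) R :=
  Matrix.of fun i j => x j ^ (lam i + i.rev)

theorem det_alternant_zero {n : ℕ} (x : Fin n → R) :
    (alternant x 0).det = ∏ i, ∏ j ∈ Finset.Ioi i, (x i - x j) := by
  have hproj : (alternant x 0).transpose = Matrix.projVandermonde 1 x := by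
    ext i j
    simp [alternant, Matrix.projVandermonde_apply]
  rw [← Matrix.det_transpose, hproj, Matrix.det_projVandermonde]
  simp

theorem det_alternant_comp_perm {n : ℕ} (x : Fin n → R) (lam : Fin n → ℕ)
    (w : Equiv.Perm (Fin n)) :
    (alternant (x ∘ w) lam).det = Equiv.Perm.sign w * (alternant x lam).det :=
  Matrix.det_permute' w (alternant x lam)

/-- Subtract from each row the multiple of the next one that clears its last entry. -/
theorem det_alternant_succ_eq_det_sum {n : ℕ} (x : Fin (n + 1) → R) {lam : Fin (n + 1) → ℕ}
    (hlam : Antitone lam) :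
    (alternant x lam).det =
      x (Fin.last n) ^ lam (Fin.last n) * ((∏ j : Fin n, (x j.castSucc - x (Fin.last n))) *
        (Matrix.of fun i j : Fin n => ∑ m ∈ Finset.Icc (lam i.succ) (lam i.castSucc),
          x (Fin.last n) ^ (lam i.castSucc - m) * x j.castSucc ^ (m + i.rev)).det) := by
  let S (i : Fin n) (j : Fin (n + 1)) : R := ∑ m ∈ Finset.Icc (lam i.succ) (lam i.castSucc),
    x (Fin.last n) ^ (lam i.castSucc - m) * x j ^ (m + i.rev)
  let B : Matrix (Fin (n + 1)) (Fin (n + 1)) R := Matrix.of fun i j =>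
    Fin.lastCases (x j ^ lam (Fin.last n)) (fun i => (x j - x (Fin.last n)) * S i j) i
  have hdet : (alternant x lam).det = B.det := by
    refine det_eq_of_forall_row_eq_smul_add_succ
      (fun i => x (Fin.last n) ^ (lam i.castSucc - lam i.succ + 1)) (fun j => ?_) fun i j => ?_
    · simp [alternant, B]
    · have hgeom := pow_sub_pow_mul_pow_eq_mul_sum_Icc (x j) (x (Fin.last n))
        (hlam (Fin.castSucc_le_succ i)) i.rev
      simpa [alternant, B, S, Fin.rev_castSucc, Fin.rev_succ, -Fin.val_rev] using
        sub_eq_iff_eq_add.1 hgeom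
  have hminor : B.submatrix (Fin.last n).succAbove (Fin.last n).succAbove =
      Matrix.of fun i j => (x j.castSucc - x (Fin.last n)) *
        Matrix.of (fun i j : Fin n => S i j.castSucc) i j := by
    ext i j
    simp [B]
  rw [hdet, Matrix.det_succ_column B (Fin.last n), Fin.sum_univ_castSucc, Finset.sum_eq_zero,
    hminor, Matrix.det_mul_row]
  · simp [B, S]
  · intro i _
    simp [B]

theorem det_alternant_succ {n : ℕ} (x : Fin (n + 1) → R) {lam : Fin (n + 1) → ℕ}
    (hlam : Antitone lam) :
    (alternant x lam).det = (∏ j : Fin n, (x j.castSucc - x (Fin.last n))) *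
      ∑ nu ∈ interlacing lam, x (Fin.last n) ^ (∑ i, lam i - ∑ i, nu i) *
        (alternant (x ∘ Fin.castSucc) nu).det := by
  have hrows := det_of_sum_finset (fun i : Fin n => Finset.Icc (lam i.succ) (lam i.castSucc))
    (fun i m => x (Fin.last n) ^ (lam i.castSucc - m)) (fun i m j => x j.castSucc ^ (m + i.rev))
  rw [det_alternant_succ_eq_det_sum x hlam, hrows, mul_left_comm, Finset.mul_sum]
  refine congr_arg _ (Finset.sum_congr rfl fun nu hnu => ?_)
  rw [sum_sub_sum_of_mem_interlacing hnu, pow_add, Finset.prod_pow_eq_pow_sum, alternant]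
  simp only [Function.comp_apply]
  ring

end Determinants

theorem det_alternant_zero_mul_prod_inv {F : Type*} [Field F] {n : ℕ} {x : Fin n → F}
    (hx : x.Injective) (hx₀ : ∀ i, x i ≠ 0) :
    (alternant x 0).det * ∏ i, ∏ j ∈ Finset.Ioi i, (1 - x j / x i)⁻¹ =
      ∏ i, x i ^ (i.rev : ℕ) := by
  simp only [det_alternant_zero, ← Finset.prod_mul_distrib]
  refine Finset.prod_congr rfl fun i _ => ?_
  have hfactor : ∀ j ∈ Finset.Ioi i, (x i - x j) * (1 - x j / x i)⁻¹ = x i := fun j hj => by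
    have hij : x i - x j ≠ 0 := sub_ne_zero.2 (hx.ne (Finset.mem_Ioi.1 hj).ne)
    have hxi := hx₀ i
    field_simp
  rw [Finset.prod_congr rfl hfactor, Finset.prod_const, Fin.card_Ioi, Fin.val_rev, Nat.sub_sub,
    add_comm]

theorem det_alternant_eq_mul_sum_perm {F : Type*} [Field F] {n : ℕ} {x : Fin n → F}
    (hx : x.Injective) (hx₀ : ∀ i, x i ≠ 0) (lam : Fin n → ℕ) :
    (alternant x lam).det = (alternant x 0).det * ∑ w : Equiv.Perm (Fin n),
      (∏ i, x (w i) ^ lam i) * ∏ i, ∏ j ∈ Finset.Ioi i, (1 - x (w j) / x (w i))⁻¹ := by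
  rw [← Matrix.det_transpose, Matrix.det_apply', Finset.mul_sum]
  refine Finset.sum_congr rfl fun w _ => ?_
  have hsign : ((Equiv.Perm.sign w : ℤ) : F) * (Equiv.Perm.sign w : ℤ) = 1 := by
    rw [← Int.cast_mul, Int.units_coe_mul_self, Int.cast_one]
  have hdenom := det_alternant_zero_mul_prod_inv (hx.comp w.injective) fun i => hx₀ (w i)
  have hsplit : ∏ i, (alternant x lam).transpose (w i) i =
      (∏ i, x (w i) ^ lam i) * ∏ i, (x ∘ w) i ^ (i.rev : ℕ) := by
    simp only [alternant, Matrix.transpose_apply, Matrix.of_apply, pow_add,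
      Finset.prod_mul_distrib, Function.comp_apply]
  rw [hsplit, ← hdenom, det_alternant_comp_perm]
  simp only [Function.comp_apply]
  linear_combination (alternant x 0).det * (∏ i, x (w i) ^ lam i) *
    (∏ i, ∏ j ∈ Finset.Ioi i, (1 - x (w j) / x (w i))⁻¹) * hsign

theorem det_alternant_eq_mul_schur {R : Type*} [CommRing R] {n : ℕ} (x : Fin n → R)
    {lam : Fin n → ℕ} (hlam : Antitone lam) :
    (alternant x lam).det = (alternant x 0).det * schur x lam := by
  induction n with
  | zero => simp [schur, tableaux]
  | succ n ih =>
    rw [det_alternant_succ x hlam, det_alternant_succ x (lam := 0) (antitone_const (c := 0)),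
      interlacing_zero, Finset.sum_singleton, schur_succ, mul_assoc]
    refine congr_arg _ ?_
    rw [Finset.mul_sum]
    refine Finset.sum_congr rfl fun nu hnu => ?_
    rw [ih _ (antitone_of_mem_interlacing hnu)]
    simp only [Pi.zero_apply, Finset.sum_const_zero, Nat.sub_zero, pow_zero]
    ring

theorem schur_eq_sum_perm {F : Type*} [Field F] {n : ℕ} {x : Fin n → F} (hx : x.Injective)
    (hx₀ : ∀ i, x i ≠ 0) {lam : Fin n → ℕ} (hlam : Antitone lam) :
    schur x lam = ∑ w : Equiv.Perm (Fin n),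
      (∏ i, x (w i) ^ lam i) * ∏ i, ∏ j ∈ Finset.Ioi i, (1 - x (w j) / x (w i))⁻¹ := by
  have hvandermonde : (alternant x 0).det ≠ 0 := by
    rw [det_alternant_zero]
    exact Finset.prod_ne_zero_iff.2 fun i _ => Finset.prod_ne_zero_iff.2 fun j hj =>
      sub_ne_zero.2 (hx.ne (Finset.mem_Ioi.1 hj).ne)
  refine mul_left_cancel₀ hvandermonde ?_
  rw [← det_alternant_eq_mul_schur x hlam, det_alternant_eq_mul_sum_perm hx hx₀]

/-! ### Polynomiality along rays -/

open HahnSeries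

section Rays

variable {Γ K : Type*} [AddCommMonoid Γ] [PartialOrder Γ] [Semiring K]

/-- The coefficients of `g` at the positive multiples of any exponent are the values of a
polynomial. -/
def IsPolynomialOnRays (g : K⟦Γ⟧) : Prop :=
  ∀ v : Γ, ∃ p : Polynomial K, ∀ k : ℕ, 0 < k → p.eval (k : K) = g.coeff (k • v)

theorem IsPolynomialOnRays.add {g h : K⟦Γ⟧} (hg : IsPolynomialOnRays g)
    (hh : IsPolynomialOnRays h) : IsPolynomialOnRays (g + h) := fun v => by
  obtain ⟨p, hp⟩ := hg v
  obtain ⟨q, hq⟩ := hh v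
  exact ⟨p + q, fun k hk => by rw [Polynomial.eval_add, hp k hk, hq k hk, coeff_add]⟩

theorem isPolynomialOnRays_single_zero [IsAddTorsionFree Γ] (c : K) :
    IsPolynomialOnRays (single (0 : Γ) c) := fun v => by
  obtain rfl | hv := eq_or_ne v 0
  · exact ⟨Polynomial.C c, fun k _ => by simp⟩
  · refine ⟨0, fun k hk => ?_⟩
    rw [coeff_single_of_ne (smul_ne_zero hk.ne' hv), Polynomial.eval_zero]

end Rays

theorem orderTop_single_one_pos {Γ K : Type*} [Zero Γ] [PartialOrder Γ] [MulZeroOneClass K]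
    [Nontrivial K] {α : Γ} (hα : 0 < α) :
    0 < (single α (1 : K)).orderTop := by
  rw [orderTop_single one_ne_zero]
  exact_mod_cast hα

theorem one_sub_single_ne_zero {Γ K : Type*} [AddCommMonoid Γ] [PartialOrder Γ] [Ring K]
    [Nontrivial K] {α : Γ} (hα : α ≠ 0) :
    (1 - single α 1 : K⟦Γ⟧) ≠ 0 := by
  refine sub_ne_zero.2 fun h => one_ne_zero (α := K) ?_
  rw [← coeff_single_same α (1 : K), ← h, coeff_one, if_neg hα]

section Support

variable {Γ K : Type*} [AddCommMonoid Γ] [PartialOrder Γ] [IsOrderedCancelAddMonoid Γ] [Ring K]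

variable (K) in
/-- The Hahn series whose support lies in the additive submonoid `H` of exponents. -/
def supportedOn (H : AddSubmonoid Γ) : Subring K⟦Γ⟧ where
  carrier := {g | g.support ⊆ H}
  zero_mem' := by simp
  one_mem' v hv := by
    by_contra hvH
    exact hv (coeff_single_of_ne fun h => hvH (h ▸ H.zero_mem))
  add_mem' hf hg := (HahnSeries.support_add_subset _ _).trans (Set.union_subset hf hg)
  neg_mem' hf := by simpa using hf
  mul_mem' hf hg := support_mul_subset.trans (Set.add_subset_iff.2 fun _ hu _ hv =>
    H.add_mem (hf hu) (hg hv))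

theorem supportedOn_mono {H H' : AddSubmonoid Γ} (h : H ≤ H') :
    supportedOn K H ≤ supportedOn K H' :=
  fun _ hg => Set.Subset.trans hg h

end Support

section PowerSeries

variable {Γ K : Type*} [AddCommGroup Γ] [LinearOrder Γ] [IsOrderedAddMonoid Γ] [CommRing K]
  [Nontrivial K]

theorem coeff_heval_single {α : Γ} (hα : 0 < α) (f : PowerSeries K) (v : Γ) :
    (PowerSeries.heval (single α (1 : K)) f).coeff v =
      ∑ᶠ c : ℕ, f.coeff c * (single (c • α) (1 : K)).coeff v := by
  rw [PowerSeries.coeff_heval]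
  refine finsum_congr fun c => ?_
  rw [SummableFamily.coeff_apply,
    SummableFamily.powerSeriesFamily_of_orderTop_pos (orderTop_single_one_pos hα),
    HahnSeries.coeff_smul, single_pow, one_pow, smul_eq_mul]

theorem coeff_heval_single_nsmul {α : Γ} (hα : 0 < α) (f : PowerSeries K) (c : ℕ) :
    (PowerSeries.heval (single α (1 : K)) f).coeff (c • α) = f.coeff c := by
  rw [coeff_heval_single hα, finsum_eq_single _ c, coeff_single_same, mul_one]
  intro d hd
  rw [coeff_single_of_ne ((nsmul_left_strictMono hα).injective.ne hd.symm), mul_zero]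

theorem heval_single_mem_supportedOn {α : Γ} (hα : 0 < α) (f : PowerSeries K) :
    PowerSeries.heval (single α (1 : K)) f ∈ supportedOn K (AddSubmonoid.multiples α) := by
  intro v hv
  by_contra hmul
  refine hv ?_
  rw [coeff_heval_single hα]
  refine finsum_eq_zero_of_forall_eq_zero fun c => ?_
  rw [coeff_single_of_ne fun h => hmul ⟨c, h.symm⟩, mul_zero]

theorem coeff_heval_single_mul {α : Γ} (hα : 0 < α) {φ : Γ →+ ℤ} (hφ : φ α = 1)
    {g : K⟦Γ⟧} (hg : g ∈ supportedOn K (AddMonoidHom.mker φ)) (f : PowerSeries K)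
    {v : Γ} {c : ℕ} (hv : φ v = c) :
    (PowerSeries.heval (single α (1 : K)) f * g).coeff v = f.coeff c * g.coeff (v - c • α) := by
  rw [coeff_mul, Finset.sum_eq_single (c • α, v - c • α), coeff_heval_single_nsmul hα]
  · rintro ⟨u, w⟩ huw hne
    obtain ⟨hu, hw, rfl⟩ := Finset.mem_antidiagonal.1 huw
    obtain ⟨d, rfl⟩ := heval_single_mem_supportedOn hα f hu
    obtain rfl : d = c := by simpa [hφ, AddMonoidHom.mem_mker.1 (hg hw)] using hv
    simp at hne
  · intro h
    contrapose! h
    exact Finset.mem_antidiagonal.2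
      ⟨left_ne_zero_of_mul h, right_ne_zero_of_mul h, add_sub_cancel _ _⟩

theorem coeff_heval_single_mul_of_neg {α : Γ} (hα : 0 < α) {φ : Γ →+ ℤ} (hφ : φ α = 1)
    {g : K⟦Γ⟧} (hg : g ∈ supportedOn K (AddMonoidHom.mker φ)) (f : PowerSeries K)
    {v : Γ} (hv : φ v < 0) :
    (PowerSeries.heval (single α (1 : K)) f * g).coeff v = 0 := by
  by_contra h
  obtain ⟨u, hu, w, hw, rfl⟩ := support_mul_subset (mem_support _ _ |>.2 h)
  obtain ⟨c, rfl⟩ := heval_single_mem_supportedOn hα f hu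
  rw [map_add, map_nsmul, hφ, AddMonoidHom.mem_mker.1 (hg hw), add_zero, nsmul_one] at hv
  exact hv.not_ge (Int.natCast_nonneg c)

end PowerSeries

section GeomSeries

variable {Γ K : Type*} [AddCommGroup Γ] [LinearOrder Γ] [IsOrderedAddMonoid Γ] [Field K]

variable (K) in
/-- `1 / (1 - t ^ α)`, which for `0 < α` is the geometric series `∑ t ^ (c • α)`. -/
noncomputable def geomSeries (α : Γ) : K⟦Γ⟧ := (1 - single α 1)⁻¹

theorem geomSeries_eq_heval {α : Γ} (hα : 0 < α) :
    geomSeries K α = PowerSeries.heval (single α (1 : K)) (PowerSeries.mk 1) := by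
  refine (eq_inv_of_mul_eq_one_left ?_).symm
  have hX := PowerSeries.heval_X _ (orderTop_single_one_pos (K := K) hα)
  calc
    _ = PowerSeries.heval (single α (1 : K)) (PowerSeries.mk 1 * (1 - PowerSeries.X)) := by
      rw [map_mul, map_sub, map_one (PowerSeries.heval _), hX]
    _ = 1 := by rw [PowerSeries.mk_one_mul_one_sub_eq_one, map_one]

theorem geomSeries_mem_supportedOn_mker {α : Γ} (hα : 0 < α) {φ : Γ →+ ℤ} (hφ : φ α = 0) :
    geomSeries K α ∈ supportedOn K (AddMonoidHom.mker φ) := by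
  rw [geomSeries_eq_heval hα]
  exact supportedOn_mono (AddSubmonoid.multiples_le.2 hφ) (heval_single_mem_supportedOn hα _)

theorem geomSeries_neg {α : Γ} (hα : α ≠ 0) : geomSeries K (-α) = 1 - geomSeries K α := by
  have hmul : single α (1 : K) * single (-α) 1 = (1 : K⟦Γ⟧) := by simp
  have hα₁ := one_sub_single_ne_zero (K := K) hα
  have hα₂ := one_sub_single_ne_zero (K := K) (neg_ne_zero.2 hα)
  unfold geomSeries
  field_simp
  linear_combination -hmul

theorem geomSeries_mul_geomSeries_add {α β : Γ} (hα : α ≠ 0) (hβ : β ≠ 0) (hαβ : α + β ≠ 0) :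
    geomSeries K α * geomSeries K (α + β) =
      geomSeries K β * geomSeries K α + (1 - geomSeries K β) * geomSeries K (α + β) := by
  have hmul : single α (1 : K) * single β 1 = (single (α + β) 1 : K⟦Γ⟧) := by simp
  have hα₁ := one_sub_single_ne_zero (K := K) hα
  have hβ₁ := one_sub_single_ne_zero (K := K) hβ
  have hαβ₁ := one_sub_single_ne_zero (K := K) hαβ
  unfold geomSeries
  field_simp
  linear_combination -hmul

/-- For `m = d + 1`, the coefficient at `v` is `choose (φ v + d) d` times the coefficient of `g` at
`v - φ v • α`. -/
theorem IsPolynomialOnRays.geomSeries_pow_mul [CharZero K] {α : Γ} (hα : 0 < α) {φ : Γ →+ ℤ}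
    (hφ : φ α = 1) {g : K⟦Γ⟧} (hg : IsPolynomialOnRays g)
    (hgφ : g ∈ supportedOn K (AddMonoidHom.mker φ)) (m : ℕ) :
    IsPolynomialOnRays (geomSeries K α ^ m * g) := by
  obtain _ | d := m
  · rwa [pow_zero, one_mul]
  rw [geomSeries_eq_heval hα, ← map_pow, PowerSeries.mk_one_pow_eq_mk_choose_add]
  intro v
  obtain hv | hv := lt_or_ge (φ v) 0
  · refine ⟨0, fun k hk => ?_⟩
    rw [coeff_heval_single_mul_of_neg hα hφ hgφ _ (by rw [map_nsmul]; exact nsmul_neg hv hk.ne'),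
      Polynomial.eval_zero]
  · obtain ⟨a, ha⟩ := Int.eq_ofNat_of_zero_le hv
    obtain ⟨p, hp⟩ := hg (v - a • α)
    refine ⟨(Polynomial.preHilbertPoly K d 0).comp (a * .X) * p, fun k hk => ?_⟩
    have hkv : φ (k • v) = (a * k : ℕ) := by rw [map_nsmul, ha]; simp [mul_comm]
    have hray : k • v - (a * k) • α = k • (v - a • α) := by rw [nsmul_sub, mul_comm, mul_nsmul']
    have hchoose := Polynomial.preHilbertPoly_eq_choose_sub_add K d (Nat.zero_le (a * k))
    rw [coeff_heval_single_mul hα hφ hgφ _ hkv, hray, ← hp k hk, PowerSeries.coeff_mk,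
      Polynomial.eval_mul, Polynomial.eval_comp, Polynomial.eval_mul, Polynomial.eval_natCast,
      Polynomial.eval_X, ← Nat.cast_mul, hchoose, Nat.sub_zero, add_comm]

end GeomSeries

section RootSubring

variable {ι Γ K : Type*} [AddCommGroup Γ] [LinearOrder Γ] [IsOrderedAddMonoid Γ] [Field K]

variable (K) in
/-- The ring generated by the series `1 / (1 - t ^ (e i - e j))` for distinct `i, j ∈ s`. -/
noncomputable def rootSubring (e : ι → Γ) (s : Set ι) : Subring K⟦Γ⟧ :=
  Subring.closure {g | ∃ i ∈ s, ∃ j ∈ s, i ≠ j ∧ geomSeries K (e i - e j) = g}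

theorem geomSeries_sub_mem_rootSubring (e : ι → Γ) {s : Set ι} {i j : ι} (hi : i ∈ s)
    (hj : j ∈ s) (hij : i ≠ j) : geomSeries K (e i - e j) ∈ rootSubring K e s :=
  Subring.subset_closure ⟨i, hi, j, hj, hij, rfl⟩

variable (K) in
/-- The combinations, with coefficients in `rootSubring K e s`, of powers of
`1 / (1 - t ^ (e i - e j))` for a single `j ∈ s` at a time. -/
noncomputable def starModule (e : ι → Γ) (i : ι) (s : Set ι) :
    Submodule (rootSubring K e s) K⟦Γ⟧ :=
  Submodule.span _ (insert 1 {g | ∃ j ∈ s, ∃ m : ℕ, geomSeries K (e i - e j) ^ m = g})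

theorem one_mem_starModule (e : ι → Γ) (i : ι) (s : Set ι) : 1 ∈ starModule K e i s :=
  Submodule.subset_span (Set.mem_insert _ _)

theorem geomSeries_pow_mem_starModule (e : ι → Γ) (i : ι) {s : Set ι} {j : ι} (hj : j ∈ s)
    (m : ℕ) : geomSeries K (e i - e j) ^ m ∈ starModule K e i s :=
  Submodule.subset_span (Set.mem_insert_of_mem _ ⟨j, hj, m, rfl⟩)

theorem geomSeries_pow_mul_pow_mem_starModule {e : ι → Γ} (he : e.Injective) {i : ι} {s : Set ι}
    (hi : i ∉ s) {j l : ι} (hj : j ∈ s) (hl : l ∈ s) (hjl : j ≠ l) : ∀ m m' : ℕ,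
    geomSeries K (e i - e j) ^ m * geomSeries K (e i - e l) ^ m' ∈ starModule K e i s
  | 0, m' => by simpa using geomSeries_pow_mem_starModule e i hl m'
  | m, 0 => by simpa using geomSeries_pow_mem_starModule e i hj m
  | m + 1, m' + 1 => by
    have hβ := geomSeries_sub_mem_rootSubring (K := K) e hj hl hjl
    have hfrac : geomSeries K (e i - e j) * geomSeries K (e i - e l) =
        geomSeries K (e j - e l) * geomSeries K (e i - e j) +
          (1 - geomSeries K (e j - e l)) * geomSeries K (e i - e l) := by
      have h := geomSeries_mul_geomSeries_add (K := K)
        (sub_ne_zero.2 (he.ne (ne_of_mem_of_not_mem hj hi).symm)) (sub_ne_zero.2 (he.ne hjl))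
        (by simpa using sub_ne_zero.2 (he.ne (ne_of_mem_of_not_mem hl hi).symm))
      rwa [sub_add_sub_cancel] at h
    have hleft := (starModule K e i s).smul_mem ⟨_, hβ⟩
      (geomSeries_pow_mul_pow_mem_starModule he hi hj hl hjl (m + 1) m')
    have hright := (starModule K e i s).smul_mem (1 - ⟨_, hβ⟩)
      (geomSeries_pow_mul_pow_mem_starModule he hi hj hl hjl m (m' + 1))
    convert add_mem hleft hright using 1
    simp only [Subring.smul_def, AddSubgroupClass.coe_sub,
      OneMemClass.coe_one, smul_eq_mul]
    linear_combination geomSeries K (e i - e j) ^ m * geomSeries K (e i - e l) ^ m' * hfrac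

theorem mul_mem_starModule {e : ι → Γ} (he : e.Injective) {i : ι} {s : Set ι} (hi : i ∉ s)
    {g h : K⟦Γ⟧} (hg : g ∈ starModule K e i s) (hh : h ∈ starModule K e i s) :
    g * h ∈ starModule K e i s := by
  suffices hle : starModule K e i s * starModule K e i s ≤ starModule K e i s from
    hle (Submodule.mul_mem_mul hg hh)
  conv_lhs => rw [starModule, Submodule.span_mul_span]
  refine Submodule.span_le.2 (Set.mul_subset_iff.2 ?_)
  rintro _ (rfl | ⟨j, hj, m, rfl⟩) _ (rfl | ⟨l, hl, m', rfl⟩)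
  · simpa using one_mem_starModule e i s
  · simpa using geomSeries_pow_mem_starModule e i hl m'
  · simpa using geomSeries_pow_mem_starModule e i hj m
  · obtain rfl | hjl := eq_or_ne j l
    · rw [← _root_.pow_add]
      exact geomSeries_pow_mem_starModule e i hj (m + m')
    · exact geomSeries_pow_mul_pow_mem_starModule he hi hj hl hjl m m'

theorem mem_starModule_of_mem_rootSubring_insert {e : ι → Γ} (he : e.Injective) {i : ι}
    {s : Set ι} (hi : i ∉ s) {g : K⟦Γ⟧} (hg : g ∈ rootSubring K e (insert i s)) :
    g ∈ starModule K e i s := by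
  let A := (starModule K e i s).toSubalgebra (one_mem_starModule e i s)
    fun _ _ => mul_mem_starModule he hi
  have hstar {j : ι} (hj : j ∈ s) : geomSeries K (e i - e j) ∈ A :=
    pow_one (geomSeries K (e i - e j)) ▸ geomSeries_pow_mem_starModule e i hj 1
  suffices hle : rootSubring K e (insert i s) ≤ A.toSubring from hle hg
  refine Subring.closure_le.2 ?_
  rintro _ ⟨j, rfl | hj, l, rfl | hl, hjl, rfl⟩
  · exact absurd rfl hjl
  · exact hstar hl
  · rw [← neg_sub, geomSeries_neg (sub_ne_zero.2 (he.ne hjl.symm))]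
    exact A.sub_mem A.one_mem (hstar hj)
  · exact A.algebraMap_mem ⟨_, geomSeries_sub_mem_rootSubring e hj hl hjl⟩

theorem rootSubring_le_supportedOn_mker {e : ι → Γ} (he : e.Injective) {s : Set ι} {φ : Γ →+ ℤ}
    (hφ : ∀ i ∈ s, φ (e i) = 0) : rootSubring K e s ≤ supportedOn K (AddMonoidHom.mker φ) := by
  refine Subring.closure_le.2 ?_
  rintro _ ⟨i, hi, j, hj, hij, rfl⟩
  have hker : φ (e i - e j) = 0 := by rw [map_sub, hφ i hi, hφ j hj, sub_zero]
  obtain hlt | hlt := (he.ne hij).lt_or_gt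
  · rw [← neg_sub, geomSeries_neg (sub_ne_zero.2 hlt.ne')]
    exact sub_mem (one_mem _) (geomSeries_mem_supportedOn_mker (sub_pos.2 hlt)
      (by rw [← neg_sub, map_neg, hker, neg_zero]))
  · exact geomSeries_mem_supportedOn_mker (sub_pos.2 hlt) hker

theorem isPolynomialOnRays_of_mem_starModule [CharZero K] {e : ι → Γ} (he : e.Injective) {i : ι}
    {s : Set ι} (hpos : ∀ j ∈ s, e j < e i) {φ : Γ →+ ℤ} (hφi : φ (e i) = 1)
    (hφ : ∀ j ∈ s, φ (e j) = 0) (hs : ∀ r ∈ rootSubring K e s, IsPolynomialOnRays r) {g : K⟦Γ⟧}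
    (hg : g ∈ starModule K e i s) : IsPolynomialOnRays g := by
  suffices hsmul : ∀ r : rootSubring K e s, IsPolynomialOnRays (r • g) by
    simpa using hsmul 1
  induction hg using Submodule.span_induction with
  | mem x hx =>
    intro r
    obtain rfl | ⟨j, hj, m, rfl⟩ := hx
    · simpa [Subring.smul_def] using hs r r.2
    · rw [Subring.smul_def, smul_eq_mul, mul_comm]
      exact (hs r r.2).geomSeries_pow_mul (sub_pos.2 (hpos j hj))
        (by rw [map_sub, hφi, hφ j hj, sub_zero]) (rootSubring_le_supportedOn_mker he hφ r.2) m
  | zero => intro r; simpa using hs 0 (zero_mem _)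
  | add x y _ _ hx hy => intro r; rw [smul_add]; exact (hx r).add (hy r)
  | smul a x _ hx => intro r; rw [smul_smul]; exact hx (r * a)

theorem isPolynomialOnRays_of_mem_rootSubring [CharZero K] (b : Module.Basis ι ℤ Γ)
    (s : Finset ι) {g : K⟦Γ⟧} (hg : g ∈ rootSubring K b (s : Set ι)) : IsPolynomialOnRays g := by
  classical
  induction s using Finset.induction_on_max_value b generalizing g with
  | empty =>
    obtain ⟨z, rfl⟩ : ∃ z : ℤ, (z : K⟦Γ⟧) = g := by
      simpa [rootSubring, Subring.mem_bot] using hg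
    exact isPolynomialOnRays_single_zero (z : K)
  | insert i s hi hmax ih =>
    rw [Finset.coe_insert] at hg
    have hne {j : ι} (hj : j ∈ s) : i ≠ j := (ne_of_mem_of_not_mem hj hi).symm
    refine isPolynomialOnRays_of_mem_starModule (φ := (b.coord i).toAddMonoidHom) b.injective
      (fun j hj => (hmax j hj).lt_of_ne (b.injective.ne (hne hj).symm)) (by simp)
      (fun j hj => ?_) (fun r => ih)
      (mem_starModule_of_mem_rootSubring_insert b.injective (by simpa using hi) hg)
    simp [(hne hj).symm]

end RootSubring

section Coefficients

theorem prod_single_one_pow {ι Γ K : Type*} [AddCommMonoid Γ] [PartialOrder Γ]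
    [IsOrderedCancelAddMonoid Γ] [CommSemiring K] (s : Finset ι) (e : ι → Γ) (c : ι → ℕ) :
    ∏ i ∈ s, single (e i) (1 : K) ^ c i = single (∑ i ∈ s, c i • e i) 1 := by
  classical
  induction s using Finset.induction_on with
  | empty => rfl
  | insert i s hi ih =>
    rw [Finset.prod_insert hi, ih, single_pow, one_pow, single_mul_single, one_mul,
      Finset.sum_insert hi]

variable {n : ℕ} {Γ K : Type*} [AddCommGroup Γ] [LinearOrder Γ] [IsOrderedAddMonoid Γ] [Field K]

theorem coeff_schur_single (b : Module.Basis (Fin n) ℤ Γ) (lam mu : Fin n → ℕ) :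
    (schur (fun i => single (b i) (1 : K)) lam).coeff (∑ i, mu i • b i) = kostka lam mu := by
  classical
  have hcoord (c : Fin n → ℕ) (i : Fin n) : b.coord i (∑ j, c j • b j) = c i := by
    simp [Finsupp.single_apply]
  have hb (c : Fin n → ℕ) : ∑ i, mu i • b i = ∑ i, c i • b i ↔ ∀ i, c i = mu i := by
    refine ⟨fun h i => ?_, fun h => by simp only [h]⟩
    have hi := congr_arg (b.coord i) h
    rw [hcoord, hcoord] at hi
    exact_mod_cast hi.symm
  simp only [schur, prod_single_one_pow, coeff_sum, coeff_single, hb, Finset.sum_boole, kostka]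

theorem coeff_schur_single_nsmul (b : Module.Basis (Fin n) ℤ Γ) {lam : Fin n → ℕ}
    (hlam : Antitone lam) (v : Γ) (k : ℕ) :
    (schur (fun i => single (b i) (1 : K)) (k • lam)).coeff (k • v) =
      ∑ w : Equiv.Perm (Fin n), (∏ i, ∏ j ∈ Finset.Ioi i, geomSeries K (b (w j) - b (w i))).coeff
        (k • (v - ∑ i, lam i • b (w i))) := by
  have hinj : (fun i => single (b i) (1 : K)).Injective := fun i j hij => b.injective <| by
    by_contra hne
    have h : (single (b j) (1 : K)).coeff (b i) = 1 := by
      rw [← show single (b i) (1 : K) = single (b j) 1 from hij, coeff_single_same]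
    rw [coeff_single_of_ne hne] at h
    exact zero_ne_one h
  have hklam : Antitone (k • lam) := hlam.const_smul (Nat.zero_le k)
  rw [schur_eq_sum_perm hinj (fun i => by simp) hklam, coeff_sum]
  refine Finset.sum_congr rfl fun w _ => ?_
  have hshift : k • (v - ∑ i, lam i • b (w i)) = k • v - ∑ i, (k • lam) i • b (w i) := by
    simp only [smul_sub, Finset.smul_sum, Pi.smul_apply, smul_eq_mul, mul_nsmul']
  simp only [prod_single_one_pow, single_div_single, div_one, hshift, coeff_single_mul, one_mul,
    geomSeries]

theorem exists_polynomial_eval_eq_kostka [CharZero K] (b : Module.Basis (Fin n) ℤ Γ)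
    {lam : Fin n → ℕ} (hlam : Antitone lam) (mu : Fin n → ℕ) :
    ∃ p : Polynomial K, ∀ k : ℕ, 0 < k → p.eval (k : K) = kostka (k • lam) (k • mu) := by
  have hroot (w : Equiv.Perm (Fin n)) : IsPolynomialOnRays
      (∏ i, ∏ j ∈ Finset.Ioi i, geomSeries K (b (w j) - b (w i))) :=
    isPolynomialOnRays_of_mem_rootSubring b Finset.univ <| Subring.prod_mem _ fun i _ =>
      Subring.prod_mem _ fun j hj => geomSeries_sub_mem_rootSubring _ (by simp) (by simp)
        (w.injective.ne (Finset.mem_Ioi.1 hj).ne')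
  choose p hp using fun w => hroot w (∑ i, mu i • b i - ∑ i, lam i • b (w i))
  refine ⟨∑ w, p w, fun k hk => ?_⟩
  have hweight : ∑ i, (k • mu) i • b i = k • ∑ i, mu i • b i := by
    simp only [Finset.smul_sum, Pi.smul_apply, smul_eq_mul, mul_nsmul']
  rw [Polynomial.eval_finsetSum, ← coeff_schur_single b, hweight,
    coeff_schur_single_nsmul b hlam]
  exact Finset.sum_congr rfl fun w _ => hp w k hk

end Coefficients

end Kostka

theorem stretched_kostka_polynomial_general (n : ℕ) (lam mu : Fin n → ℕ) (hlam : Antitone lam) :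
    ∃ p : Polynomial ℚ, ∀ k : ℕ, 0 < k →
      p.eval (k : ℚ) =
        (Set.ncard {T : ℕ → ℕ → ℕ | IsSSYT n (fun i => k * lam i) T ∧
          ∀ i : Fin n, contentCount n (fun i => k * lam i) T (i.1 + 1) = k * mu i} : ℚ) := by
  let b : Module.Basis (Fin n) ℤ (Lex (Fin n → ℤ)) :=
    (Pi.basisFun ℤ (Fin n)).map (toLexLinearEquiv ℤ (Fin n → ℤ))
  obtain ⟨p, hp⟩ := Kostka.exists_polynomial_eval_eq_kostka (K := ℚ) b hlam mu
  refine ⟨p, fun k hk => (hp k hk).trans (congr_arg _ ?_)⟩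
  exact (Kostka.ncard_isSSYT_eq_kostka (hlam.const_smul (Nat.zero_le k)) (k • mu)).symm

/-- Stretched Kostka coefficients are polynomial in the stretching factor: for
partitions `λ` and `μ` of the same size with at most `n` parts, there is a polynomial
`p ∈ ℚ[x]` whose value at every positive integer `k` is the Kostka coefficient
`K_{kλ,kμ}`, the number of semistandard Young tableaux of shape `kλ` with entries in
`{1, …, n}` and exactly `kμ_i` entries equal to `i` for each `i`. -/
theorem stretched_kostka_polynomial (n : ℕ) (hn : 1 ≤ n) (lam mu : Fin n → ℕ)
    (hlam : Antitone lam) (hmu : Antitone mu)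
    (hsize : ∑ i : Fin n, lam i = ∑ i : Fin n, mu i) :
    ∃ p : Polynomial ℚ, ∀ k : ℕ, 0 < k →
      p.eval (k : ℚ) =
        (Set.ncard {T : ℕ → ℕ → ℕ | IsSSYT n (fun i => k * lam i) T ∧
          ∀ i : Fin n, contentCount n (fun i => k * lam i) T (i.1 + 1) = k * mu i} : ℚ) :=
  stretched_kostka_polynomial_general n lam mu hlam
end
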